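/- Let G be a finite abstract simplicial complex. Then for every simplex x and every simplex y ≠ x, Σ_{z : z∩x ≠ ∅} ω(z) χ(St(z) ∩ St(y)) = 0, and Σ_{z : z∩x ≠ ∅} ω(z) χ(St(z) ∩ St(x)) = ω(x). -/

import Mathlib

theorem Finset.sum_powerset_neg_one_pow_card_rat {V : Type*} [DecidableEq V] (s : Finset V) :
    ∑ t ∈ s.powerset, (-1 : ℚ) ^ t.card = if s = ∅ then 1 else 0 := by
  exact_mod_cast congrArg (Int.cast : ℤ → ℚ) (Finset.sum_powerset_neg_one_pow_card (x := s))

theorem Finset.sum_powerset_filter_inter_nonempty {V : Type*} [DecidableEq V]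
    (w x : Finset V) (hw : w.Nonempty) :
    ∑ z ∈ w.powerset.filter (fun z => (z ∩ x).Nonempty), (-1 : ℚ) ^ (z.card + 1)
      = if w ⊆ x then 1 else 0 := by
  have hcompl : w.powerset.filter (fun z => ¬ (z ∩ x).Nonempty) = (w \ x).powerset := by
    ext z
    simp [Finset.subset_sdiff, Finset.disjoint_iff_inter_eq_empty]
  have hsplit := Finset.sum_filter_add_sum_filter_not w.powerset
    (fun z => (z ∩ x).Nonempty) (fun z => (-1 : ℚ) ^ z.card)
  rw [hcompl, Finset.sum_powerset_neg_one_pow_card_rat,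
    Finset.sum_powerset_neg_one_pow_card_rat, if_neg hw.ne_empty] at hsplit
  simp only [Finset.sdiff_eq_empty_iff_subset] at hsplit
  simp only [pow_succ, mul_neg, mul_one, Finset.sum_neg_distrib]
  linarith

theorem Finset.sum_Icc_neg_one_pow_card {V : Type*} [DecidableEq V] (y x : Finset V) :
    ∑ w ∈ Finset.Icc y x, (-1 : ℚ) ^ (w.card + 1)
      = if x = y then (-1 : ℚ) ^ (x.card + 1) else 0 := by
  by_cases hyx : y ⊆ x
  · have hdisj : ∀ t ∈ (x \ y).powerset, Disjoint y t := fun t ht =>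
      Finset.disjoint_sdiff.mono_right (Finset.mem_powerset.1 ht)
    rw [Finset.Icc_eq_image_powerset hyx, Finset.sum_image]
    · have hcard : ∀ t ∈ (x \ y).powerset,
          (-1 : ℚ) ^ ((y ∪ t).card + 1) = (-1) ^ (y.card + 1) * (-1) ^ t.card := by
        intro t ht
        rw [Finset.card_union_of_disjoint (hdisj t ht)]
        ring
      rw [Finset.sum_congr rfl hcard, ← Finset.mul_sum,
        Finset.sum_powerset_neg_one_pow_card_rat]
      by_cases h : x = y
      · simp [h]
      · have : ¬ x ⊆ y := fun h' => h (h'.antisymm hyx)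
        simp [h, this]
    · intro a ha b hb hab
      rw [← Finset.union_sdiff_cancel_left (hdisj a ha),
        ← Finset.union_sdiff_cancel_left (hdisj b hb)]
      exact congrArg (· \ y) hab
  · rw [Finset.Icc_eq_empty hyx, if_neg (fun h => hyx h.ge), Finset.sum_empty]

/-- Both cases of the Gauss–Bonnet formula for the Green function of a finite abstract
simplicial complex. -/
theorem sum_inter_nonempty_mul_sum_star {V : Type*} [DecidableEq V]
    (G : Finset (Finset V))
    (hne : ∀ x ∈ G, x.Nonempty)
    (hclosed : ∀ x ∈ G, ∀ y ⊆ x, y.Nonempty → y ∈ G)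
    (x : Finset V) (hx : x ∈ G) (y : Finset V) (hy : y ∈ G) :
    ∑ z ∈ G.filter (fun z => (z ∩ x).Nonempty),
        (-1 : ℚ) ^ (z.card + 1) *
          ∑ w ∈ G.filter (fun w => z ⊆ w ∧ y ⊆ w), (-1 : ℚ) ^ (w.card + 1)
      = if x = y then (-1 : ℚ) ^ (x.card + 1) else 0 := by
  simp only [Finset.mul_sum]
  rw [Finset.sum_comm' (t' := G.filter (fun w => y ⊆ w))
    (s' := fun w => w.powerset.filter (fun z => (z ∩ x).Nonempty))]
  · rw [← Finset.sum_Icc_neg_one_pow_card]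
    have hinner : ∀ w ∈ G.filter (fun w => y ⊆ w),
        ∑ z ∈ w.powerset.filter (fun z => (z ∩ x).Nonempty),
          (-1 : ℚ) ^ (z.card + 1) * (-1) ^ (w.card + 1)
        = if w ⊆ x then (-1) ^ (w.card + 1) else 0 := by
      intro w hw
      rw [← Finset.sum_mul, Finset.sum_powerset_filter_inter_nonempty w x
        (hne w (Finset.mem_filter.1 hw).1)]
      simp
    rw [Finset.sum_congr rfl hinner, ← Finset.sum_filter]
    refine Finset.sum_congr ?_ fun _ _ => rfl
    ext w
    simp only [Finset.mem_filter, Finset.mem_Icc]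
    exact ⟨fun h => ⟨h.1.2, h.2⟩, fun h =>
      ⟨⟨hclosed x hx w h.2 ((hne y hy).mono h.1), h.1⟩, h.2⟩⟩
  · intro z w
    simp only [Finset.mem_filter, Finset.mem_powerset]
    exact ⟨fun h => ⟨⟨h.2.2.1, h.1.2⟩, h.2.1, h.2.2.2⟩, fun h =>
      ⟨⟨hclosed w h.2.1 z h.1.1 (h.1.2.mono Finset.inter_subset_left), h.1.2⟩,
        h.2.1, h.1.1, h.2.2⟩⟩

/-- Gauss–Bonnet form of `L g = 1`: for simplices `x ≠ y` in a finite abstract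
simplicial complex, `Σ_{z ∩ x ≠ ∅} ω(z) χ(St(z) ∩ St(y)) = 0`, while
`Σ_{z ∩ x ≠ ∅} ω(z) χ(St(z) ∩ St(x)) = ω(x)`. -/
theorem green_gauss_bonnet {V : Type*} [DecidableEq V]
    (G : Finset (Finset V))
    (hne : ∀ x ∈ G, x.Nonempty)
    (hclosed : ∀ x ∈ G, ∀ y ⊆ x, y.Nonempty → y ∈ G) :
    (∀ x ∈ G, ∀ y ∈ G, x ≠ y →
      ∑ z ∈ G.filter (fun z => (z ∩ x).Nonempty),
        (-1 : ℚ) ^ (z.card + 1) *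
          ∑ w ∈ G.filter (fun w => z ⊆ w ∧ y ⊆ w), (-1 : ℚ) ^ (w.card + 1) = 0) ∧
    (∀ x ∈ G,
      ∑ z ∈ G.filter (fun z => (z ∩ x).Nonempty),
        (-1 : ℚ) ^ (z.card + 1) *
          ∑ w ∈ G.filter (fun w => z ⊆ w ∧ x ⊆ w), (-1 : ℚ) ^ (w.card + 1)
        = (-1 : ℚ) ^ (x.card + 1)) := by
  refine ⟨fun x hx y hy hxy => ?_, fun x hx => ?_⟩
  · rw [sum_inter_nonempty_mul_sum_star G hne hclosed x hx y hy, if_neg hxy]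
  · rw [sum_inter_nonempty_mul_sum_star G hne hclosed x hx x hx, if_pos rfl]
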